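/- arXiv:2511.20929 — 3 statements merged into one kernel-verified Lean document; each statement's English description precedes it below -/
import Mathlib

section
/- Let μ and μ' be DNS satisfaction functions and let I be a PB instance with budget b, minimum project cost c_min and maximum project cost c_max. Then the outcome P_G of Greedy_{μ'} satisfies uw_μ(P_G) ≥ ((b − c_max)/b)·(c_min/c_max)·uw_μ(P*) for every feasible outcome P* ⊆ P; i.e., Greedy_{μ'} has utilitarian guarantee ((b − c_max)/b)·(c_min/c_max) with respect to μ. -/
open Finset
open scoped Classical

noncomputable section

/-- A participatory budgeting (PB) instance. -/
structure PB (π ν : Type) where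
  projs : Finset π
  voters : Finset ν
  approves : ν → Finset π
  cost : π → ℝ
  budget : ℝ
  projs_nonempty : projs.Nonempty
  budget_pos : 0 < budget
  cost_pos : ∀ p ∈ projs, 0 < cost p
  cost_le_budget : ∀ p ∈ projs, cost p ≤ budget
  approves_subset : ∀ i ∈ voters, approves i ⊆ projs

/-- A satisfaction function assigns a positive value to each positive cost. -/
def IsSat (μ : ℝ → ℝ) : Prop := ∀ t : ℝ, 0 < t → 0 < μ t

/-- A DNS function: weakly increasing, with weakly decreasing satisfaction per unit cost. -/
def IsDNS (μ : ℝ → ℝ) : Prop :=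
  IsSat μ ∧ (∀ s t : ℝ, 0 < s → s ≤ t → μ s ≤ μ t) ∧
    (∀ s t : ℝ, 0 < s → s ≤ t → μ t / t ≤ μ s / s)

namespace PB

variable {π ν : Type}

/-- Supporters of a project. -/
def supp (I : PB π ν) (p : π) : Finset ν := I.voters.filter (fun i => p ∈ I.approves i)

/-- Total cost of a set of projects. -/
def costOf (I : PB π ν) (S : Finset π) : ℝ := ∑ p ∈ S, I.cost p

/-- A feasible outcome. -/
def feasibleSet (I : PB π ν) (S : Finset π) : Prop := S ⊆ I.projs ∧ I.costOf S ≤ I.budget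

/-- Minimum project cost. -/
def cmin (I : PB π ν) : ℝ := I.projs.inf' I.projs_nonempty I.cost

/-- Maximum project cost. -/
def cmax (I : PB π ν) : ℝ := I.projs.sup' I.projs_nonempty I.cost

/-- Utilitarian welfare of a set of projects. -/
def uw (I : PB π ν) (μ : ℝ → ℝ) (S : Finset π) : ℝ :=
  ∑ p ∈ S, ((I.supp p).card : ℝ) * μ (I.cost p)

/-- The value ("bang per buck") of a project. -/
def projVal (I : PB π ν) (μ : ℝ → ℝ) (p : π) : ℝ :=
  ((I.supp p).card : ℝ) * μ (I.cost p) / I.cost p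

/-- Satisfaction of voter `i` from an outcome. -/
def satOf (I : PB π ν) (μ : ℝ → ℝ) (i : ν) (S : Finset π) : ℝ :=
  ∑ p ∈ S ∩ I.approves i, μ (I.cost p)

/-- Minimum satisfaction of a project in the instance. -/
def muMin (I : PB π ν) (μ : ℝ → ℝ) : ℝ :=
  I.projs.inf' I.projs_nonempty (fun p => μ (I.cost p))

/-- Maximum satisfaction of a project in the instance. -/
def muMax (I : PB π ν) (μ : ℝ → ℝ) : ℝ :=
  I.projs.sup' I.projs_nonempty (fun p => μ (I.cost p))

/-- The maximal utilitarian welfare over feasible outcomes. -/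
def maxUW (I : PB π ν) (μ : ℝ → ℝ) : ℝ :=
  (I.projs.powerset.filter (fun S => I.costOf S ≤ I.budget)).sup'
    ⟨∅, Finset.mem_filter.mpr ⟨Finset.empty_mem_powerset _,
      by simpa [PB.costOf] using I.budget_pos.le⟩⟩
    (I.uw μ)

/-- A group `N'` is `T`-cohesive. -/
def cohesive (I : PB π ν) (N' : Finset ν) (T : Finset π) : Prop :=
  N' ⊆ I.voters ∧ T ⊆ I.projs ∧ (∀ i ∈ N', T ⊆ I.approves i) ∧
    I.costOf T ≤ ((N'.card : ℝ) / (I.voters.card : ℝ)) * I.budget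

/-- Extended justified representation up to one project w.r.t. `μ`. -/
def EJR1 (I : PB π ν) (μ : ℝ → ℝ) (W : Finset π) : Prop :=
  ∀ N' T, I.cohesive N' T →
    T ⊆ W ∨ ∃ i ∈ N', ∃ p ∈ I.approves i, p ∉ W ∧
      I.satOf μ i W + μ (I.cost p) > I.satOf μ i T

/-- Pick the element of maximal `f`-value, breaking ties by the linear order. -/
def pickMax [LinearOrder π] (f : π → ℝ) (S : Finset π) (h : S.Nonempty) : π :=
  (S.filter (fun p => ∀ q ∈ S, f q ≤ f p)).min' (by
    obtain ⟨p, hp, hm⟩ := S.exists_max_image f h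
    exact ⟨p, Finset.mem_filter.mpr ⟨hp, hm⟩⟩)

/-- Pick the element of minimal `f`-value, breaking ties by the linear order. -/
def pickMin [LinearOrder π] (f : π → ℝ) (S : Finset π) (h : S.Nonempty) : π :=
  (S.filter (fun p => ∀ q ∈ S, f p ≤ f q)).min' (by
    obtain ⟨p, hp, hm⟩ := S.exists_min_image f h
    exact ⟨p, Finset.mem_filter.mpr ⟨hp, hm⟩⟩)

section Greedy

variable [LinearOrder π]

/-- One choice of the greedy rule: among the unchosen affordable projects, the one of
maximum value (ties broken by the linear order); `none` if no project is affordable. -/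
def greedyStep (I : PB π ν) (μ : ℝ → ℝ) (rem : Finset π) (budg : ℝ) : Option π :=
  if h : (rem.filter (fun p => I.cost p ≤ budg)).Nonempty then
    some (pickMax (I.projVal μ) (rem.filter (fun p => I.cost p ≤ budg)) h)
  else none

/-- The (ordered) list of projects chosen by the greedy rule, with fuel. -/
def greedyAux (I : PB π ν) (μ : ℝ → ℝ) : ℕ → Finset π → ℝ → List π
  | 0, _, _ => []
  | (k+1), rem, budg =>
    match I.greedyStep μ rem budg with
    | none => []
    | some p => p :: greedyAux I μ k (rem.erase p) (budg - I.cost p)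

/-- The projects chosen by `Greedy_μ`, in order of selection. -/
def greedySeq (I : PB π ν) (μ : ℝ → ℝ) : List π :=
  greedyAux I μ I.projs.card I.projs I.budget

/-- The outcome of the greedy rule started from a set `rem` of unchosen projects
with remaining budget `budg`. -/
def greedyFrom (I : PB π ν) (μ : ℝ → ℝ) (rem : Finset π) (budg : ℝ) : Finset π :=
  (greedyAux I μ rem.card rem budg).toFinset

/-- The outcome of `Greedy_μ`. -/
def greedy (I : PB π ν) (μ : ℝ → ℝ) : Finset π := (I.greedySeq μ).toFinset

/-- The state (unchosen projects, remaining budget) of `Greedy_μ` after `k` stages. -/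
def greedyStateAux (I : PB π ν) (μ : ℝ → ℝ) : ℕ → Finset π × ℝ
  | 0 => (I.projs, I.budget)
  | (k+1) =>
    match I.greedyStep μ (greedyStateAux I μ k).1 (greedyStateAux I μ k).2 with
    | none => greedyStateAux I μ k
    | some p => ((greedyStateAux I μ k).1.erase p, (greedyStateAux I μ k).2 - I.cost p)

/-- The project chosen by `Greedy_μ` at stage `k+1` (i.e. after `k` stages), if any. -/
def greedyChoice (I : PB π ν) (μ : ℝ → ℝ) (k : ℕ) : Option π :=
  I.greedyStep μ (I.greedyStateAux μ k).1 (I.greedyStateAux μ k).2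

end Greedy

section MES

variable [LinearOrder π]

/-- The set of values `ρ ≥ 0` at which project `p` can be bought given voter budgets `bud`. -/
def rhoSet (I : PB π ν) (μ : ℝ → ℝ) (bud : ν → ℝ) (p : π) : Set ℝ :=
  {ρ : ℝ | 0 ≤ ρ ∧ ∑ i ∈ I.supp p, min (bud i) (ρ * μ (I.cost p)) = I.cost p}

/-- `ρ(p)`: the least `ρ ≥ 0` at which `p` can be bought (junk value if none exists). -/
def rho (I : PB π ν) (μ : ℝ → ℝ) (bud : ν → ℝ) (p : π) : ℝ := sInf (I.rhoSet μ bud p)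

/-- One choice of MES: among the unchosen projects with `ρ(p) < ∞`, one minimizing `ρ(p)`
(ties broken by the linear order); `none` if no project can be bought. -/
def mesStep (I : PB π ν) (μ : ℝ → ℝ) (rem : Finset π) (bud : ν → ℝ) : Option π :=
  if h : (rem.filter (fun p => (I.rhoSet μ bud p).Nonempty)).Nonempty then
    some (pickMin (I.rho μ bud) (rem.filter (fun p => (I.rhoSet μ bud p).Nonempty)) h)
  else none

/-- Voter budgets after the supporters of `p` pay for it. -/
def mesPay (I : PB π ν) (μ : ℝ → ℝ) (bud : ν → ℝ) (p : π) : ν → ℝ :=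
  fun i => if i ∈ I.supp p then bud i - min (bud i) (I.rho μ bud p * μ (I.cost p)) else bud i

/-- The state (unchosen projects, voter budgets) of `MES_μ` after `k` stages. -/
def mesStateAux (I : PB π ν) (μ : ℝ → ℝ) : ℕ → Finset π × (ν → ℝ)
  | 0 => (I.projs, fun _ => I.budget / (I.voters.card : ℝ))
  | (k+1) =>
    match I.mesStep μ (mesStateAux I μ k).1 (mesStateAux I μ k).2 with
    | none => mesStateAux I μ k
    | some p => ((mesStateAux I μ k).1.erase p, I.mesPay μ (mesStateAux I μ k).2 p)

/-- The project chosen by `MES_μ` at stage `k+1` (i.e. after `k` stages), if any. -/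
def mesChoice (I : PB π ν) (μ : ℝ → ℝ) (k : ℕ) : Option π :=
  I.mesStep μ (I.mesStateAux μ k).1 (I.mesStateAux μ k).2

/-- The final state of `MES_μ`. -/
def mesFinal (I : PB π ν) (μ : ℝ → ℝ) : Finset π × (ν → ℝ) :=
  I.mesStateAux μ I.projs.card

/-- The outcome of `MES_μ`. -/
def mesOutcome (I : PB π ν) (μ : ℝ → ℝ) : Finset π := I.projs \ (I.mesFinal μ).1

/-- The outcome of `MES_μ` completed by `Greedy_μ`: run MES, then greedy on the unchosen
projects with the remaining total budget. -/
def completedMES (I : PB π ν) (μ : ℝ → ℝ) : Finset π :=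
  I.mesOutcome μ ∪
    I.greedyFrom μ (I.mesFinal μ).1 (I.budget - I.costOf (I.mesOutcome μ))

/-- Voter `i` is budget-limited for project `p` after `k` stages of `MES_μ`:
`p` is unchosen and approved by `i`, affordable from the total remaining budget,
but an equal split of its cost exceeds `i`'s personal budget. -/
def budgetLimitedAt (I : PB π ν) (μ : ℝ → ℝ) (k : ℕ) (i : ν) (p : π) : Prop :=
  i ∈ I.voters ∧ p ∈ (I.mesStateAux μ k).1 ∧ p ∈ I.approves i ∧
    I.cost p ≤ ∑ j ∈ I.voters, (I.mesStateAux μ k).2 j ∧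
    (I.mesStateAux μ k).2 i < I.cost p / ((I.supp p).card : ℝ)

end MES

/-- Total cost of a list of projects. -/
def listCost (I : PB π ν) (L : List π) : ℝ := (L.map I.cost).sum

/-- Total utilitarian welfare of a list of projects. -/
def listUW (I : PB π ν) (μ : ℝ → ℝ) (L : List π) : ℝ :=
  (L.map (fun p => ((I.supp p).card : ℝ) * μ (I.cost p))).sum

end PB

/-!
Let `S` be the set of projects that `Greedy_μ'` buys before it first meets an unchosen project it
cannot afford. Up to that moment the affordability constraint never binds, so every project of `S`
has at least the `μ'`-value of every project outside `S`; and if `S` is not everything, then it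
costs more than `b - c_max`.

For DNS functions the ratio `μ / μ'` varies by a factor of at most `c_max / c_min` over the project
costs, so with respect to `μ` the values of projects in `S` are still at least `r = c_min / c_max`
times the values of projects outside `S`. Hence some price `θ` has values at most `θ` outside `S`
and at least `r * θ` inside `S`. Comparing surpluses over this price, `r * (uw P* - θ * c(P*))` is
at most `uw S - r * θ * c(S)`. Let `α = (b - c_max) / b`, so that `α * b ≤ c(S)`; the convex
combination with weights `α` and `1 - α` of the resulting `r * uw P* - r * θ * (1 - α) * b ≤ uw S`
and of `r * θ * α * b ≤ uw S` is the claim.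
-/

section Knapsack

variable {ι R : Type*} [CommRing R] [LinearOrder R] [IsStrictOrderedRing R]
  {S T : Finset ι} {w c : ι → R} {r θ α b : R}

theorem mul_sum_sub_le_sum_sub_of_threshold (hr : 0 ≤ r) (hr1 : r ≤ 1)
    (hw : ∀ i ∈ S, 0 ≤ w i) (hS : ∀ i ∈ S, r * θ * c i ≤ w i)
    (hT : ∀ i ∈ T, i ∉ S → w i ≤ θ * c i) :
    r * (∑ i ∈ T, w i - θ * ∑ i ∈ T, c i) ≤ ∑ i ∈ S, w i - r * θ * ∑ i ∈ S, c i := by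
  calc r * (∑ i ∈ T, w i - θ * ∑ i ∈ T, c i)
      = ∑ i ∈ T, r * (w i - θ * c i) := by
        rw [mul_sum T c, ← sum_sub_distrib, mul_sum]
    _ = ∑ i ∈ T ∩ S, r * (w i - θ * c i) + ∑ i ∈ T \ S, r * (w i - θ * c i) :=
        (sum_inter_add_sum_sdiff ..).symm
    _ ≤ ∑ i ∈ T ∩ S, r * (w i - θ * c i) := by
        refine add_le_of_nonpos_right (sum_nonpos fun i hi ↦ ?_)
        obtain ⟨hiT, hiS⟩ := mem_sdiff.1 hi
        exact mul_nonpos_of_nonneg_of_nonpos hr (sub_nonpos.2 (hT i hiT hiS))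
    _ ≤ ∑ i ∈ T ∩ S, (w i - r * θ * c i) := by
        refine sum_le_sum fun i hi ↦ ?_
        have hrw : r * w i ≤ w i := mul_le_of_le_one_left (hw i (mem_inter.1 hi).2) hr1
        linarith
    _ ≤ ∑ i ∈ S, (w i - r * θ * c i) :=
        sum_le_sum_of_subset_of_nonneg inter_subset_right fun i hi _ ↦ sub_nonneg.2 (hS i hi)
    _ = ∑ i ∈ S, w i - r * θ * ∑ i ∈ S, c i := by rw [sum_sub_distrib, mul_sum]

theorem mul_mul_sum_le_sum_of_threshold (hα : 0 ≤ α) (hα1 : α ≤ 1) (hr : 0 ≤ r) (hr1 : r ≤ 1)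
    (hθ : 0 ≤ θ) (hw : ∀ i ∈ S, 0 ≤ w i) (hS : ∀ i ∈ S, r * θ * c i ≤ w i)
    (hT : ∀ i ∈ T, i ∉ S → w i ≤ θ * c i) (hcT : ∑ i ∈ T, c i ≤ b)
    (hcS : α * b ≤ ∑ i ∈ S, c i) :
    α * r * ∑ i ∈ T, w i ≤ ∑ i ∈ S, w i := by
  have hrθ : 0 ≤ r * θ := mul_nonneg hr hθ
  have hcT' : r * θ * ∑ i ∈ T, c i ≤ r * θ * b := mul_le_mul_of_nonneg_left hcT hrθ
  have hcS' : r * θ * (α * b) ≤ r * θ * ∑ i ∈ S, c i := mul_le_mul_of_nonneg_left hcS hrθ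
  have hsurplus : r * ∑ i ∈ T, w i ≤ ∑ i ∈ S, w i + r * θ * ((1 - α) * b) := by
    linarith [mul_sum_sub_le_sum_sub_of_threshold hr hr1 hw hS hT]
  have hspent : r * θ * (α * b) ≤ ∑ i ∈ S, w i := by
    refine hcS'.trans ?_
    rw [mul_sum]
    exact sum_le_sum hS
  calc α * r * ∑ i ∈ T, w i
      = α * (r * ∑ i ∈ T, w i) := mul_assoc ..
    _ ≤ α * (∑ i ∈ S, w i + r * θ * ((1 - α) * b)) := mul_le_mul_of_nonneg_left hsurplus hα
    _ = α * ∑ i ∈ S, w i + (1 - α) * (r * θ * (α * b)) := by ring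
    _ ≤ α * ∑ i ∈ S, w i + (1 - α) * ∑ i ∈ S, w i := by
        gcongr
    _ = ∑ i ∈ S, w i := by ring

end Knapsack

namespace IsDNS

variable {μ μ' : ℝ → ℝ} {s t : ℝ}

theorem mul_le_mul_of_le (hμ : IsDNS μ) (hs : 0 < s) (hst : s ≤ t) : s * μ t ≤ t * μ s := by
  have hdiv := hμ.2.2 s t hs hst
  rw [div_le_div_iff₀ (hs.trans_le hst) hs] at hdiv
  linarith

theorem mul_mul_le_mul_mul_of_le (hμ : IsDNS μ) (hμ' : IsDNS μ') (hs : 0 < s) (hst : s ≤ t) :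
    s * (μ t * μ' s) ≤ t * (μ s * μ' t) := by
  have ht : 0 < t := hs.trans_le hst
  calc s * (μ t * μ' s) = (s * μ t) * μ' s := (mul_assoc ..).symm
    _ ≤ (t * μ s) * μ' t :=
        mul_le_mul (hμ.mul_le_mul_of_le hs hst) (hμ'.2.1 s t hs hst) (hμ'.1 s hs).le
          (mul_pos ht (hμ.1 s hs)).le
    _ = t * (μ s * μ' t) := mul_assoc ..

theorem min_mul_le_max_mul (hμ : IsDNS μ) (hμ' : IsDNS μ') (hs : 0 < s) (ht : 0 < t) :
    min s t * (μ t * μ' s) ≤ max s t * (μ s * μ' t) := by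
  rcases le_total s t with hst | hts
  · rw [min_eq_left hst, max_eq_right hst]
    exact hμ.mul_mul_le_mul_mul_of_le hμ' hs hst
  · rw [min_eq_right hts, max_eq_left hts, mul_comm (μ t), mul_comm (μ s)]
    exact hμ'.mul_mul_le_mul_mul_of_le hμ ht hts

end IsDNS

namespace PB

section Welfare

variable {π ν : Type} (I : PB π ν) {μ μ' : ℝ → ℝ} {S T : Finset π} {p q : π}

theorem cmin_pos : 0 < I.cmin := (lt_inf'_iff _).2 I.cost_pos

theorem cmin_le_cost (hp : p ∈ I.projs) : I.cmin ≤ I.cost p := inf'_le _ hp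

theorem cost_le_cmax (hp : p ∈ I.projs) : I.cost p ≤ I.cmax := le_sup' _ hp

theorem cmin_le_cmax : I.cmin ≤ I.cmax :=
  let ⟨_, hp⟩ := I.projs_nonempty
  (I.cmin_le_cost hp).trans (I.cost_le_cmax hp)

theorem cmax_pos : 0 < I.cmax := I.cmin_pos.trans_le I.cmin_le_cmax

theorem cmax_le_budget : I.cmax ≤ I.budget := sup'_le _ _ I.cost_le_budget

theorem card_supp_mul_nonneg (hμ : IsSat μ) (hp : p ∈ I.projs) :
    0 ≤ (#(I.supp p) : ℝ) * μ (I.cost p) :=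
  mul_nonneg (Nat.cast_nonneg _) (hμ _ (I.cost_pos p hp)).le

theorem projVal_nonneg (hμ : IsSat μ) (hp : p ∈ I.projs) : 0 ≤ I.projVal μ p :=
  div_nonneg (I.card_supp_mul_nonneg hμ hp) (I.cost_pos p hp).le

theorem projVal_mul_cost (hp : p ∈ I.projs) :
    I.projVal μ p * I.cost p = (#(I.supp p) : ℝ) * μ (I.cost p) :=
  div_mul_cancel₀ _ (I.cost_pos p hp).ne'

theorem uw_nonneg (hμ : IsSat μ) (hS : S ⊆ I.projs) : 0 ≤ I.uw μ S :=
  sum_nonneg fun _ hp ↦ I.card_supp_mul_nonneg hμ (hS hp)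

theorem uw_mono (hμ : IsSat μ) (hST : S ⊆ T) (hT : T ⊆ I.projs) : I.uw μ S ≤ I.uw μ T :=
  sum_le_sum_of_subset_of_nonneg hST fun _ hp _ ↦ I.card_supp_mul_nonneg hμ (hT hp)

theorem min_cost_mul_projVal_le (hμ : IsDNS μ) (hμ' : IsDNS μ') (hp : p ∈ I.projs)
    (hq : q ∈ I.projs) (hqp : I.projVal μ' q ≤ I.projVal μ' p) :
    min (I.cost p) (I.cost q) * I.projVal μ q ≤
      max (I.cost p) (I.cost q) * I.projVal μ p := by
  have hcp := I.cost_pos p hp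
  have hcq := I.cost_pos q hq
  have hμq := hμ.1 _ hcq
  refine le_of_mul_le_mul_right ?_ (hμ'.1 _ hcq)
  calc min (I.cost p) (I.cost q) * I.projVal μ q * μ' (I.cost q)
      = min (I.cost p) (I.cost q) * μ (I.cost q) * I.projVal μ' q := by
        unfold projVal; ring
    _ ≤ min (I.cost p) (I.cost q) * μ (I.cost q) * I.projVal μ' p := by gcongr
    _ = #(I.supp p) / I.cost p *
          (min (I.cost p) (I.cost q) * (μ (I.cost q) * μ' (I.cost p))) := by
        unfold projVal; ring
    _ ≤ #(I.supp p) / I.cost p *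
          (max (I.cost p) (I.cost q) * (μ (I.cost p) * μ' (I.cost q))) := by
        gcongr ?_ * ?_
        exact hμ.min_mul_le_max_mul hμ' hcp hcq
    _ = max (I.cost p) (I.cost q) * I.projVal μ p * μ' (I.cost q) := by
        unfold projVal; ring

theorem cmin_div_cmax_mul_projVal_le (hμ : IsDNS μ) (hμ' : IsDNS μ') (hp : p ∈ I.projs)
    (hq : q ∈ I.projs) (hqp : I.projVal μ' q ≤ I.projVal μ' p) :
    I.cmin / I.cmax * I.projVal μ q ≤ I.projVal μ p := by
  rw [div_mul_eq_mul_div, div_le_iff₀' I.cmax_pos]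
  calc I.cmin * I.projVal μ q
      ≤ min (I.cost p) (I.cost q) * I.projVal μ q :=
        mul_le_mul_of_nonneg_right (le_min (I.cmin_le_cost hp) (I.cmin_le_cost hq))
          (I.projVal_nonneg hμ.1 hq)
    _ ≤ max (I.cost p) (I.cost q) * I.projVal μ p :=
        I.min_cost_mul_projVal_le hμ hμ' hp hq hqp
    _ ≤ I.cmax * I.projVal μ p :=
        mul_le_mul_of_nonneg_right (max_le (I.cost_le_cmax hp) (I.cost_le_cmax hq))
          (I.projVal_nonneg hμ.1 hp)

theorem mul_uw_le_uw_of_mul_projVal_le {r α b : ℝ} (hμ : IsSat μ) (hα : 0 ≤ α) (hα1 : α ≤ 1)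
    (hr : 0 ≤ r) (hr1 : r ≤ 1) (hS : S ⊆ I.projs) (hT : T ⊆ I.projs)
    (hval : ∀ p ∈ S, ∀ q ∈ T, q ∉ S → r * I.projVal μ q ≤ I.projVal μ p)
    (hcT : I.costOf T ≤ b) (hcS : T ⊆ S ∨ α * b ≤ I.costOf S) :
    α * r * I.uw μ T ≤ I.uw μ S := by
  by_cases hTS : T ⊆ S
  · calc α * r * I.uw μ T ≤ I.uw μ T :=
          mul_le_of_le_one_left (I.uw_nonneg hμ hT) (mul_le_one₀ hα1 hr hr1)
      _ ≤ I.uw μ S := I.uw_mono hμ hTS hS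
  obtain ⟨m, hm, hmax⟩ := exists_max_image (T \ S) (I.projVal μ) (sdiff_nonempty.2 hTS)
  obtain ⟨hmT, hmS⟩ := mem_sdiff.1 hm
  refine mul_mul_sum_le_sum_of_threshold (θ := I.projVal μ m) hα hα1 hr hr1
    (I.projVal_nonneg hμ (hT hmT)) (fun p hp ↦ I.card_supp_mul_nonneg hμ (hS hp))
    (fun p hp ↦ ?_) (fun q hqT hqS ↦ ?_) hcT (hcS.resolve_left hTS)
  · rw [← I.projVal_mul_cost (hS hp)]
    exact mul_le_mul_of_nonneg_right (hval p hp m hmT hmS) (I.cost_pos p (hS hp)).le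
  · rw [← I.projVal_mul_cost (hT hqT)]
    exact mul_le_mul_of_nonneg_right (hmax q (mem_sdiff.2 ⟨hqT, hqS⟩)) (I.cost_pos q (hT hqT)).le

/-- `S` is top-valued in `T` with respect to `μ`: no project of `T` that `S` leaves out has a larger
value than a project of `S`. The greedy rule, as long as it can afford every remaining project,
builds such a set. -/
def IsTopValued (μ : ℝ → ℝ) (S T : Finset π) : Prop :=
  ∀ p ∈ S, ∀ q ∈ T, q ∉ S → I.projVal μ q ≤ I.projVal μ p

theorem isTopValued_empty : I.IsTopValued μ ∅ T := fun _ hp ↦ absurd hp (notMem_empty _)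

end Welfare

section GreedyRun

variable {π ν : Type} [LinearOrder π]

theorem pickMax_mem (f : π → ℝ) {S : Finset π} (h : S.Nonempty) : pickMax f S h ∈ S :=
  (mem_filter.1 (min'_mem _ _)).1

theorem le_pickMax (f : π → ℝ) {S : Finset π} {q : π} (hq : q ∈ S) :
    f q ≤ f (pickMax f S ⟨q, hq⟩) :=
  (mem_filter.1 (min'_mem (S.filter fun p ↦ ∀ q ∈ S, f q ≤ f p) _)).2 q hq

variable (I : PB π ν) (μ : ℝ → ℝ) {rem : Finset π} {budg : ℝ} {p q : π}

theorem mem_of_greedyStep_eq_some (h : I.greedyStep μ rem budg = some p) : p ∈ rem := by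
  unfold greedyStep at h
  split_ifs at h with hne
  cases h
  exact (mem_filter.1 (pickMax_mem _ hne)).1

theorem projVal_le_of_greedyStep_eq_some (h : I.greedyStep μ rem budg = some p) (hq : q ∈ rem)
    (hcq : I.cost q ≤ budg) : I.projVal μ q ≤ I.projVal μ p := by
  unfold greedyStep at h
  split_ifs at h
  cases h
  exact le_pickMax _ (mem_filter.2 ⟨hq, hcq⟩)

theorem lt_cost_of_greedyStep_eq_none (h : I.greedyStep μ rem budg = none) (hq : q ∈ rem) :
    budg < I.cost q := by
  unfold greedyStep at h
  split_ifs at h with hne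
  by_contra! hcq
  exact hne ⟨q, mem_filter.2 ⟨hq, hcq⟩⟩

theorem mem_of_mem_greedyAux {k : ℕ} (hp : p ∈ I.greedyAux μ k rem budg) : p ∈ rem := by
  induction k generalizing rem budg with
  | zero => simp [greedyAux] at hp
  | succ k ih =>
    rw [greedyAux] at hp
    split at hp
    case h_1 => simp at hp
    case h_2 p₀ hstep =>
      rcases List.mem_cons.1 hp with rfl | hp
      · exact I.mem_of_greedyStep_eq_some μ hstep
      · exact mem_of_mem_erase (ih hp)

theorem greedy_subset_projs : I.greedy μ ⊆ I.projs := fun _ hp ↦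
  I.mem_of_mem_greedyAux μ (List.mem_toFinset.1 hp)

theorem exists_isTopValued_subset_greedyAux {k : ℕ} (hk : #rem ≤ k) :
    ∃ S : Finset π, (∀ p ∈ S, p ∈ I.greedyAux μ k rem budg) ∧
      I.IsTopValued μ S rem ∧
      (rem ⊆ S ∨ ∃ q ∈ rem, budg < I.costOf S + I.cost q) := by
  induction k generalizing rem budg with
  | zero => exact ⟨∅, by simp, I.isTopValued_empty, .inl (card_eq_zero.1 (Nat.le_zero.1 hk)).subset⟩
  | succ k ih =>
    by_cases hafford : ∀ q ∈ rem, I.cost q ≤ budg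
    · rw [greedyAux]
      split
      case h_1 hstep =>
        refine ⟨∅, by simp, I.isTopValued_empty, .inl fun q hq ↦ ?_⟩
        exact absurd (hafford q hq) (I.lt_cost_of_greedyStep_eq_none μ hstep hq).not_ge
      case h_2 p hstep =>
        have hp := I.mem_of_greedyStep_eq_some μ hstep
        obtain ⟨S, hSgreedy, hSval, hSfill⟩ := ih (rem := rem.erase p) (budg := budg - I.cost p)
          (by rw [card_erase_of_mem hp]; omega)
        have hpS : p ∉ S := fun hpS ↦
          notMem_erase p rem (I.mem_of_mem_greedyAux μ (hSgreedy p hpS))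
        refine ⟨insert p S, ?_, ?_, ?_⟩
        · simpa using fun x hx ↦ Or.inr (hSgreedy x hx)
        · intro x hx q hq hqS
          rw [mem_insert, not_or] at hqS
          rcases mem_insert.1 hx with rfl | hx
          · exact I.projVal_le_of_greedyStep_eq_some μ hstep hq (hafford q hq)
          · exact hSval x hx q (mem_erase.2 ⟨hqS.1, hq⟩) hqS.2
        · refine hSfill.imp subset_insert_iff.2 fun ⟨q, hq, hlt⟩ ↦ ?_
          refine ⟨q, mem_of_mem_erase hq, ?_⟩
          rw [costOf, sum_insert hpS, ← costOf]
          linarith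
    · push Not at hafford
      obtain ⟨q, hq, hlt⟩ := hafford
      exact ⟨∅, by simp, I.isTopValued_empty, .inr ⟨q, hq, by simpa [costOf] using hlt⟩⟩

theorem exists_isTopValued_subset_greedy :
    ∃ S ⊆ I.greedy μ, I.IsTopValued μ S I.projs ∧
      (I.projs ⊆ S ∨ I.budget - I.cmax ≤ I.costOf S) := by
  obtain ⟨S, hSgreedy, hSval, hSfill⟩ :=
    I.exists_isTopValued_subset_greedyAux μ (budg := I.budget) (le_refl #I.projs)
  refine ⟨S, fun p hp ↦ List.mem_toFinset.2 (hSgreedy p hp), hSval, ?_⟩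
  refine hSfill.imp_right fun ⟨q, hq, hlt⟩ ↦ ?_
  linarith [I.cost_le_cmax hq]

end GreedyRun

end PB

/-- Utilitarian guarantee of Greedy run with an "incorrect" DNS satisfaction
function `μ'`, measured w.r.t. the actual DNS satisfaction function `μ`. -/
theorem greedy_incorrect_satisfaction_guarantee {π ν : Type} [LinearOrder π] (I : PB π ν)
    (μ μ' : ℝ → ℝ) (hμ : IsDNS μ) (hμ' : IsDNS μ') :
    ∀ Pstar : Finset π, I.feasibleSet Pstar →
      I.uw μ (I.greedy μ') ≥
        ((I.budget - I.cmax) / I.budget) * (I.cmin / I.cmax) * I.uw μ Pstar := by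
  rintro P ⟨hP, hcP⟩
  obtain ⟨S, hSgreedy, hSval, hSfill⟩ := I.exists_isTopValued_subset_greedy μ'
  have hS : S ⊆ I.projs := hSgreedy.trans (I.greedy_subset_projs μ')
  have hα : 0 ≤ (I.budget - I.cmax) / I.budget :=
    div_nonneg (sub_nonneg.2 I.cmax_le_budget) I.budget_pos.le
  have hα1 : (I.budget - I.cmax) / I.budget ≤ 1 :=
    div_le_one_of_le₀ (sub_le_self _ I.cmax_pos.le) I.budget_pos.le
  have hr : 0 ≤ I.cmin / I.cmax := div_nonneg I.cmin_pos.le I.cmax_pos.le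
  have hr1 : I.cmin / I.cmax ≤ 1 := div_le_one_of_le₀ I.cmin_le_cmax I.cmax_pos.le
  have hval : ∀ p ∈ S, ∀ q ∈ P, q ∉ S → I.cmin / I.cmax * I.projVal μ q ≤ I.projVal μ p :=
    fun p hp q hq hqS ↦
      I.cmin_div_cmax_mul_projVal_le hμ hμ' (hS hp) (hP hq) (hSval p hp q (hP hq) hqS)
  have hfill : P ⊆ S ∨ (I.budget - I.cmax) / I.budget * I.budget ≤ I.costOf S :=
    hSfill.imp hP.trans (div_mul_cancel₀ _ I.budget_pos.ne').trans_le
  calc (I.budget - I.cmax) / I.budget * (I.cmin / I.cmax) * I.uw μ P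
      ≤ I.uw μ S := I.mul_uw_le_uw_of_mul_projVal_le hμ.1 hα hα1 hr hr1 hS hP hval hcP hfill
    _ ≤ I.uw μ (I.greedy μ') := I.uw_mono hμ.1 hSgreedy (I.greedy_subset_projs μ')
end
end

section
/- For all real numbers b, c_min, c_max, α, M with 0 < c_min ≤ c_max ≤ b, α ≥ 1, and c_min/c_max ≤ M ≤ 1, it holds that (α² + (b/c_min)·M² + α·(−1 − M) + M − (c_max/c_min)·M²) / (α·(b/c_min)·M) ≥ 2·√(c_min/b) − (c_min + c_max)/b. -/
open Finset
open scoped Classical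

noncomputable section

theorem two_mul_sqrt_inv_le_sq_add_mul_sq_div {t x y : ℝ} (ht : 0 < t) (hx : 0 < x)
    (hy : 0 < y) : 2 * √t⁻¹ ≤ (x ^ 2 + t * y ^ 2) / (x * t * y) := by
  have am_gm : 2 * x * (√t * y) ≤ x ^ 2 + (√t * y) ^ 2 := two_mul_le_add_sq x (√t * y)
  have sq_sqrt_mul : (√t * y) ^ 2 = t * y ^ 2 := by rw [mul_pow, Real.sq_sqrt ht.le]
  have sqrt_inv_mul : √t⁻¹ * t = √t := by
    rw [Real.sqrt_inv, inv_mul_eq_div, Real.div_sqrt]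
  rw [le_div_iff₀ (by positivity)]
  calc 2 * √t⁻¹ * (x * t * y) = 2 * x * (√t⁻¹ * t * y) := by ring
    _ = 2 * x * (√t * y) := by rw [sqrt_inv_mul]
    _ ≤ x ^ 2 + t * y ^ 2 := sq_sqrt_mul ▸ am_gm

theorem neg_one_add_div_le_div {K : Type*} [Field K] [LinearOrder K] [IsStrictOrderedRing K]
    {k t x y : K} (ht : 0 < t) (hy : 0 < y) (hyx : y ≤ x) (hky : 1 ≤ k * y) :
    -(1 + k) / t ≤ (x * (-1 - y) + y - k * y ^ 2) / (x * t * y) := by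
  have hx : 0 < x := hy.trans_le hyx
  have gap_nonneg : 0 ≤ (x - y) * (k * y - 1) :=
    mul_nonneg (sub_nonneg.mpr hyx) (sub_nonneg.mpr hky)
  rw [div_le_div_iff₀ ht (by positivity)]
  calc -(1 + k) * (x * t * y)
      = (x * (-1 - y) + y - k * y ^ 2 - (x - y) * (k * y - 1)) * t := by ring
    _ ≤ (x * (-1 - y) + y - k * y ^ 2) * t :=
      mul_le_mul_of_nonneg_right (sub_le_self _ gap_nonneg) ht.le

theorem case2_inequality_general {b cmin cmax α M : ℝ} (hb : 0 < b) (hcmin : 0 < cmin)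
    (hM : 0 < M) (hMα : M ≤ α) (hcM : cmin ≤ cmax * M) :
    (α ^ 2 + (b / cmin) * M ^ 2 + α * (-1 - M) + M - (cmax / cmin) * M ^ 2) /
        (α * (b / cmin) * M) ≥
      2 * √(cmin / b) - (cmin + cmax) / b := by
  have ht : 0 < b / cmin := div_pos hb hcmin
  have hky : 1 ≤ cmax / cmin * M := by rwa [div_mul_eq_mul_div, one_le_div hcmin]
  calc 2 * √(cmin / b) - (cmin + cmax) / b
      = 2 * √(b / cmin)⁻¹ + -(1 + cmax / cmin) / (b / cmin) := by
        rw [inv_div]; field_simp; ring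
    _ ≤ (α ^ 2 + b / cmin * M ^ 2) / (α * (b / cmin) * M) +
        (α * (-1 - M) + M - cmax / cmin * M ^ 2) / (α * (b / cmin) * M) :=
      add_le_add (two_mul_sqrt_inv_le_sq_add_mul_sq_div ht (hM.trans_le hMα) hM)
        (neg_one_add_div_le_div ht hM hMα hky)
    _ = _ := by rw [← add_div]; congr 1; ring

/-- The arithmetic inequality from Case 2 of Theorem 4.1. -/
theorem case2_inequality (b cmin cmax α M : ℝ) (h1 : 0 < cmin) (h2 : cmin ≤ cmax)
    (h3 : cmax ≤ b) (hα : 1 ≤ α) (hM1 : cmin / cmax ≤ M) (hM2 : M ≤ 1) :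
    (α ^ 2 + (b / cmin) * M ^ 2 + α * (-1 - M) + M - (cmax / cmin) * M ^ 2) /
        (α * (b / cmin) * M) ≥
      2 * Real.sqrt (cmin / b) - (cmin + cmax) / b := by
  have hcmax : 0 < cmax := h1.trans_le h2
  exact case2_inequality_general (hcmax.trans_le h3) h1 ((div_pos h1 hcmax).trans_le hM1)
    (hM2.trans hα) ((div_le_iff₀' hcmax).mp hM1)
end
end

section
/- Let I be a PB instance with budget b and let μ be any satisfaction function. Let P₁, P₂ ⊆ P with c(P₂) ≤ b, and suppose v* ≥ 0 is a real number such that v_μ(p) ≥ v* for every p ∈ P₁ \ P₂ and v_μ(p) ≤ v* for every p ∈ P₂ \ P₁. Then uw_μ(P₂) ≤ uw_μ(P₁) + v*·(b − c(P₁)). -/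
open Finset
open scoped Classical

noncomputable section

/-!
Charge every project `v` per unit of cost, so that a project of welfare `w p = |N_p| * μ (c p)`
contributes the surplus `w p - v * c p`. Projects only in `P₂` have nonpositive surplus and those
only in `P₁` nonnegative surplus, hence the total surplus of `P₂` is at most that of `P₁`. Since
`v` is nonnegative, the charge for `P₂` is at most `v` times the budget.
-/

section Exchange

variable {ι : Type*} [DecidableEq ι] {s t : Finset ι}

theorem sum_le_sum_of_sdiff_nonpos_of_sdiff_nonneg {M : Type*} [AddCommMonoid M] [PartialOrder M]
    [IsOrderedCancelAddMonoid M] {f : ι → M} (hs : ∀ i ∈ s \ t, f i ≤ 0)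
    (ht : ∀ i ∈ t \ s, 0 ≤ f i) : ∑ i ∈ s, f i ≤ ∑ i ∈ t, f i :=
  sum_sdiff_le_sum_sdiff.mp ((sum_nonpos hs).trans (sum_nonneg ht))

theorem sum_sub_mul_sum_le_sum_sub_mul_sum {R : Type*} [Ring R] [PartialOrder R]
    [IsOrderedAddMonoid R] {w c : ι → R} {v : R} (hs : ∀ i ∈ s \ t, w i ≤ v * c i)
    (ht : ∀ i ∈ t \ s, v * c i ≤ w i) :
    ∑ i ∈ s, w i - v * ∑ i ∈ s, c i ≤ ∑ i ∈ t, w i - v * ∑ i ∈ t, c i := by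
  simp only [mul_sum, ← sum_sub_distrib]
  exact sum_le_sum_of_sdiff_nonpos_of_sdiff_nonneg (fun i hi ↦ sub_nonpos.mpr (hs i hi))
    fun i hi ↦ sub_nonneg.mpr (ht i hi)

theorem exchange_bound_general {K : Type*} [Field K] [LinearOrder K] [IsStrictOrderedRing K]
    {w c : ι → K} {v b : K} (hc : ∀ i ∈ symmDiff s t, 0 < c i) (hb : ∑ i ∈ t, c i ≤ b)
    (hv : 0 ≤ v) (hs : ∀ i ∈ s \ t, v ≤ w i / c i) (ht : ∀ i ∈ t \ s, w i / c i ≤ v) :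
    ∑ i ∈ t, w i ≤ ∑ i ∈ s, w i + v * (b - ∑ i ∈ s, c i) := by
  have hs' : ∀ i ∈ s \ t, v * c i ≤ w i := fun i hi ↦
    (le_div_iff₀ (hc i (mem_union_left _ hi))).mp (hs i hi)
  have ht' : ∀ i ∈ t \ s, w i ≤ v * c i := fun i hi ↦
    (div_le_iff₀ (hc i (mem_union_right _ hi))).mp (ht i hi)
  have surplus_le : ∑ i ∈ t, w i - v * ∑ i ∈ t, c i ≤ ∑ i ∈ s, w i - v * ∑ i ∈ s, c i :=
    sum_sub_mul_sum_le_sum_sub_mul_sum ht' hs'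
  have cost_le : v * ∑ i ∈ t, c i ≤ v * b := mul_le_mul_of_nonneg_left hb hv
  linarith

end Exchange

/-- The knapsack-style exchange bound underlying the Greedy guarantee. -/
theorem exchange_bound {π ν : Type} (I : PB π ν) (μ : ℝ → ℝ) (hμ : IsSat μ)
    (P₁ P₂ : Finset π) (h1 : P₁ ⊆ I.projs) (h2 : P₂ ⊆ I.projs)
    (hc : I.costOf P₂ ≤ I.budget) (v : ℝ) (hv : 0 ≤ v)
    (hlo : ∀ p ∈ P₁ \ P₂, v ≤ I.projVal μ p)
    (hhi : ∀ p ∈ P₂ \ P₁, I.projVal μ p ≤ v) :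
    I.uw μ P₂ ≤ I.uw μ P₁ + v * (I.budget - I.costOf P₁) :=
  exchange_bound_general (fun p hp ↦ I.cost_pos p (union_subset h1 h2 (symmDiff_subset_union hp)))
    hc hv hlo hhi
end
end
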